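/- arXiv:1602.04377 — 2 statements merged into one kernel-verified Lean document; each statement's English description precedes it below -/
import Mathlib

section
/- Let n ≥ 1, let G be a compact subgroup of GL(n, ℝ), and let Π be the group of affine transformations of ℝⁿ of the form x ↦ g x + v with g ∈ G and v ∈ ℝⁿ. Then for every convex body K in ℝⁿ, the set of points x ∈ ℝⁿ satisfying A x = x for every A ∈ Π with A(K) = K coincides with the set of values p(K), where p ranges over all Π-invariant points p : Wₙ → ℝⁿ. -/
/-!
The value at `K` of an invariant point is fixed by every `A ∈ Π` with `A(K) = K`, directly by
invariance. Conversely, let `x` be fixed by all these `A`. The proof builds an invariant point with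
value `x` at `K`, defined even on all nonempty compact sets.

The vector `corner L` of coordinatewise suprema over `L` is continuous in `L` and commutes with
translations, so a continuous translation-covariant map is the same as `corner L + F (L - corner L)`
with `F` continuous. The requirement `f (g K) = g x` for all `g ∈ G` prescribes `F` on the compact
set of all `g K - corner (g K)`; since `x` is fixed by the stabilizer of `K`, the prescription is
consistent, and Tietze's theorem extends it (`exists_translation_covariant`). Averaging
`g (f (g⁻¹ L))` over the Haar probability measure of `G` makes the map covariant under `G` too, and
does not change the value `x` at `K`, because there the integrand is constant.
-/

open Set TopologicalSpace

noncomputable section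

/-- `ℝⁿ` as a Euclidean space. -/
abbrev Euc (n : ℕ) := EuclideanSpace ℝ (Fin n)

/-- The space `Wₙ` of convex bodies in `ℝⁿ`: compact convex sets with nonempty interior,
topologized (as a subtype of the nonempty compact sets) by the Hausdorff metric. -/
abbrev ConvBody (n : ℕ) :=
  {K : NonemptyCompacts (Euc n) //
    Convex ℝ (K : Set (Euc n)) ∧ (interior (K : Set (Euc n))).Nonempty}

/-- The corner of least upper bounds of the coordinates over `L`: a continuous point of a compact
set which commutes with translations, though not with linear maps. -/
def corner {n : ℕ} (L : NonemptyCompacts (Euc n)) : Euc n :=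
  WithLp.toLp 2 fun i => sSup ((fun y : Euc n => y i) '' (L : Set (Euc n)))

theorem continuous_sSup_image {X : Type*} [TopologicalSpace X] (f : X → ℝ) (hf : Continuous f) :
    Continuous fun L : NonemptyCompacts X => sSup (f '' (L : Set X)) := by
  have hb : ∀ L : NonemptyCompacts X, BddAbove (f '' (L : Set X)) := fun L =>
    (L.isCompact.image hf).bddAbove
  rw [continuous_iff_lower_upperSemicontinuous]
  constructor
  · rw [lowerSemicontinuous_iff_isOpen_preimage]
    intro a
    convert NonemptyCompacts.isOpen_inter_nonempty_of_isOpen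
      (isOpen_Ioi.preimage hf : IsOpen (f ⁻¹' Ioi a)) using 1
    ext L
    simp only [mem_preimage, mem_Ioi, mem_ofPred_eq]
    rw [lt_csSup_iff (hb L) (L.nonempty.image f)]
    simp [Set.Nonempty]
  · rw [upperSemicontinuous_iff_isOpen_preimage]
    intro a
    convert NonemptyCompacts.isOpen_subsets_of_isOpen
      (isOpen_Iio.preimage hf : IsOpen (f ⁻¹' Iio a)) using 1
    ext L
    simp only [mem_preimage, mem_Iio, mem_ofPred_eq]
    rw [L.isCompact.sSup_lt_iff_of_continuous L.nonempty hf.continuousOn]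
    rfl

theorem continuous_corner {n : ℕ} : Continuous (corner : NonemptyCompacts (Euc n) → Euc n) := by
  unfold corner
  have := fun i : Fin n => continuous_sSup_image (fun y : Euc n => y i) (by fun_prop)
  fun_prop

/-- The image of a nonempty compact set under the affine map `y ↦ a y + v`. -/
def affImage {n : ℕ} (a : Euc n →L[ℝ] Euc n) (v : Euc n) (L : NonemptyCompacts (Euc n)) :
    NonemptyCompacts (Euc n) :=
  L.map (fun y => a y + v) (by fun_prop)

theorem coe_affImage {n : ℕ} (a : Euc n →L[ℝ] Euc n) (v : Euc n) (L : NonemptyCompacts (Euc n)) :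
    (affImage a v L : Set (Euc n)) = (fun y => a y + v) '' (L : Set (Euc n)) :=
  NonemptyCompacts.coe_map _ _

theorem affImage_affImage {n : ℕ} (a b : Euc n →L[ℝ] Euc n) (v w : Euc n)
    (L : NonemptyCompacts (Euc n)) :
    affImage a v (affImage b w L) = affImage (a * b) (a w + v) L := by
  apply SetLike.coe_injective
  simp only [coe_affImage, image_image]
  simp [add_assoc]

theorem affImage_one {n : ℕ} (L : NonemptyCompacts (Euc n)) : affImage 1 0 L = L := by
  apply SetLike.coe_injective
  simp [coe_affImage]

theorem corner_translate {n : ℕ} (v : Euc n) (L : NonemptyCompacts (Euc n)) :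
    corner (affImage 1 v L) = corner L + v := by
  ext i
  simp only [corner, coe_affImage, image_image, PiLp.add_apply]
  have h := L.isCompact.image (show Continuous fun y : Euc n => y i by fun_prop)
  have := (OrderIso.addRight (v i)).map_csSup' (L.nonempty.image _) h.bddAbove
  simp only [OrderIso.addRight_apply, image_image] at this
  simp [this]

theorem continuous_affImage {n : ℕ} : Continuous
    fun q : (Euc n →L[ℝ] Euc n) × Euc n × NonemptyCompacts (Euc n) => affImage q.1 q.2.1 q.2.2 := by
  unfold affImage
  exact Continuous.nonemptyCompacts_map' (by fun_prop) (by fun_prop)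

/-- A point `x` fixed by the stabilizer of `K` is the value at `K` of a continuous map `f` which
commutes with translations and satisfies `f (g K) = g x` on the `G`-orbit of `K`. It is obtained by
Tietze extension from the compact set of all `g K`, each translated to have its corner at `0`. -/
theorem exists_translation_covariant {n : ℕ}
    (G : Subgroup ((Euc n →L[ℝ] Euc n)ˣ))
    (hG : IsCompact (G : Set ((Euc n →L[ℝ] Euc n)ˣ)))
    (K : NonemptyCompacts (Euc n)) (x : Euc n)
    (hx : ∀ g ∈ G, ∀ v : Euc n, affImage g v K = K → (g : Euc n →L[ℝ] Euc n) x + v = x) :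
    ∃ f : NonemptyCompacts (Euc n) → Euc n, Continuous f ∧
      (∀ v L, f (affImage 1 v L) = f L + v) ∧
      ∀ g ∈ G, f (affImage g 0 K) = (g : Euc n →L[ℝ] Euc n) x := by
  have : CompactSpace G := isCompact_iff_compactSpace.mp hG
  let N : NonemptyCompacts (Euc n) → NonemptyCompacts (Euc n) := fun L => affImage 1 (-corner L) L
  have hN : Continuous N := continuous_affImage.comp
    (continuous_const.prodMk (continuous_corner.neg.prodMk continuous_id))
  let ρ : G → Euc n →L[ℝ] Euc n := fun g => ((g : (Euc n →L[ℝ] Euc n)ˣ) : Euc n →L[ℝ] Euc n)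
  have hρ : Continuous ρ := Units.continuous_val.comp continuous_subtype_val
  have ρone : ρ 1 = 1 := rfl
  have ρmul : ∀ g h, ρ (g * h) = ρ g * ρ h := fun g h => rfl
  have ρinv : ∀ g y, ρ g (ρ g⁻¹ y) = y := fun g y => by
    rw [← mul_apply_eq_comp, ← ρmul, mul_inv_cancel]; rfl
  have hgK : Continuous fun g : G => affImage (ρ g) 0 K :=
    continuous_affImage.comp (hρ.prodMk (continuous_const.prodMk continuous_const))
  let M : G → NonemptyCompacts (Euc n) := fun g => N (affImage (ρ g) 0 K)
  have hM : Continuous M := hN.comp hgK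
  let φ : C(G, Euc n) := ⟨fun g => ρ g x - corner (affImage (ρ g) 0 K),
    (hρ.clm_apply continuous_const).sub (continuous_corner.comp hgK)⟩
  let Mr : C(G, range M) := ⟨rangeFactorization M, hM.rangeFactorization⟩
  have hMr : Topology.IsQuotientMap Mr :=
    Topology.IsQuotientMap.of_surjective_continuous rangeFactorization_surjective Mr.continuous
  have hφ : ∀ g h : G, Mr g = Mr h → φ g = φ h := by
    intro g h hgh
    have hgh : M g = M h := congrArg Subtype.val hgh
    -- `M g = M h` says that `gK` and `hK` are translates of each other, so that `h⁻¹g`, followed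
    -- by a translation, stabilizes `K` and hence fixes `x`.
    have e := congrArg (affImage (ρ h⁻¹) (ρ h⁻¹ (corner (affImage (ρ h) 0 K)))) hgh
    simp only [M, N, affImage_affImage, one_mul, ← ρmul, inv_mul_cancel, map_neg,
      one_apply_eq_self, zero_add, neg_add_cancel, ρone, affImage_one] at e
    have e' := congrArg (ρ h) (hx _ (h⁻¹ * g).2 _ e)
    change ρ h (ρ (h⁻¹ * g) x + _) = _ at e'
    simp only [map_add, map_neg, ρmul, mul_apply_eq_comp, ρinv] at e'
    change ρ g x - _ = ρ h x - _
    rw [← e']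
    abel
  obtain ⟨F, hF⟩ := ContinuousMap.exists_restrict_eq (isCompact_range hM).isClosed
    (hMr.lift φ hφ)
  have hFM : ∀ g, F (M g) = φ g := by
    intro g
    have := DFunLike.congr_fun hF (Mr g)
    rw [← DFunLike.congr_fun (hMr.lift_comp φ hφ) g]
    exact this
  refine ⟨fun L => corner L + F (N L), continuous_corner.add (F.continuous.comp hN), ?_, ?_⟩
  · intro v L
    have : N (affImage 1 v L) = N L := by
      simp [N, affImage_affImage, corner_translate]
    simp only [this, corner_translate]
    abel
  · intro g hg
    change corner _ + F (M ⟨g, hg⟩) = _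
    rw [hFM]
    exact add_sub_cancel _ _

theorem stmt2 (n : ℕ) (hn : 1 ≤ n)
    (G : Subgroup ((Euc n →L[ℝ] Euc n)ˣ))
    (hG : IsCompact (G : Set ((Euc n →L[ℝ] Euc n)ˣ)))
    (K : ConvBody n) :
    -- the set of points fixed by every `A ∈ Π` with `A(K) = K` ...
    {x : Euc n | ∀ g ∈ G, ∀ v : Euc n,
        (fun y => (g : Euc n →L[ℝ] Euc n) y + v) '' (K.1 : Set (Euc n)) = (K.1 : Set (Euc n)) →
        (g : Euc n →L[ℝ] Euc n) x + v = x} =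
    -- ... equals the set of values `p(K)` over all `Π`-invariant points `p`
    {x : Euc n | ∃ p : ConvBody n → Euc n,
        Continuous p ∧
        (∀ K' L : ConvBody n, ∀ g ∈ G, ∀ v : Euc n,
          (L.1 : Set (Euc n)) =
              (fun y => (g : Euc n →L[ℝ] Euc n) y + v) '' (K'.1 : Set (Euc n)) →
          p L = (g : Euc n →L[ℝ] Euc n) (p K') + v) ∧
        p K = x} := by
  apply Subset.antisymm
  · intro x hx
    obtain ⟨f, hf, hft, hfK⟩ := exists_translation_covariant G hG K.1 x fun g hg v h =>
      hx g hg v (by rw [← coe_affImage, h])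
    have : CompactSpace G := isCompact_iff_compactSpace.mp hG
    let : MeasurableSpace G := borel G
    have : BorelSpace G := ⟨rfl⟩
    let μ : MeasureTheory.Measure G :=
      MeasureTheory.Measure.haarMeasure (⊤ : PositiveCompacts G)
    have : MeasureTheory.IsProbabilityMeasure μ :=
      ⟨by simpa using MeasureTheory.Measure.haarMeasure_self (K₀ := (⊤ : PositiveCompacts G))⟩
    let ρ : G → Euc n →L[ℝ] Euc n := fun g => ((g : (Euc n →L[ℝ] Euc n)ˣ) : Euc n →L[ℝ] Euc n)
    have hρ : Continuous ρ := Units.continuous_val.comp continuous_subtype_val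
    have ρmul : ∀ g h, ρ (g * h) = ρ g * ρ h := fun g h => rfl
    have ρinv : ∀ g y, ρ g (ρ g⁻¹ y) = y := fun g y => by
      rw [← mul_apply_eq_comp, ← ρmul, mul_inv_cancel]; rfl
    -- The average over `G` of the conjugates of `f`; the inverse sits inside so that left
    -- invariance of Haar measure gives covariance under `G`.
    let I : NonemptyCompacts (Euc n) → G → Euc n := fun L g => ρ g (f (affImage (ρ g⁻¹) 0 L))
    have hI : Continuous I.uncurry := by
      refine (hρ.comp continuous_snd).clm_apply (hf.comp (continuous_affImage.comp
        ((hρ.comp continuous_snd.inv).prodMk (continuous_const.prodMk continuous_fst))))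
    have hInt : ∀ L, MeasureTheory.Integrable (I L) μ := fun L =>
      (hI.comp (Continuous.prodMk_right L)).integrable_of_hasCompactSupport
        (HasCompactSupport.of_compactSpace _)
    let P : NonemptyCompacts (Euc n) → Euc n := fun L => ∫ g, I L g ∂μ
    have hP : Continuous P := by
      have := continuous_parametric_integral_of_continuous (μ := μ) hI
        (isCompact_univ)
      simpa using this
    have hcov : ∀ (h : G) (v : Euc n) L, P (affImage (ρ h) v L) = ρ h (P L) + v := by
      intro h v L
      have key : ∀ g, I (affImage (ρ h) v L) g = ρ h (I L (h⁻¹ * g)) + v := by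
        intro g
        have e : affImage (ρ g⁻¹) 0 (affImage (ρ h) v L) =
            affImage 1 (ρ g⁻¹ v) (affImage (ρ (h⁻¹ * g)⁻¹) 0 L) := by
          simp [affImage_affImage, ρmul, mul_inv_rev]
        simp only [I]
        rw [e, hft, map_add, ρinv, ρmul h⁻¹ g, mul_apply_eq_comp, ρinv]
      simp only [P, key]
      rw [MeasureTheory.integral_mul_left_eq_self (μ := μ) (fun g => ρ h (I L g) + v) h⁻¹,
        MeasureTheory.integral_add ((ρ h).integrable_comp (hInt L)) (by simp),
        ContinuousLinearMap.integral_comp_comm _ (hInt L)]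
      simp
    refine ⟨fun L => P L.1, hP.comp continuous_subtype_val, ?_, ?_⟩
    · intro K' L g hg v h
      have : L.1 = affImage g v K'.1 := SetLike.coe_injective (by rw [h, coe_affImage])
      simp only [this]
      exact hcov ⟨g, hg⟩ v K'.1
    · have key : ∀ g, I K.1 g = x := by
        intro g
        simp only [I]
        rw [hfK _ (g⁻¹).2]
        exact ρinv g x
      simp [P, key]
  · rintro x ⟨p, -, hp, rfl⟩ g hg v h
    exact (hp K K g hg v h.symm).symm
end
end

section
/- Let n ≥ 1. Then for every convex body K in ℝⁿ, the set of points x ∈ ℝⁿ satisfying A x = x for every similarity transformation A of ℝⁿ with A(K) = K coincides with the set of values p(K), where p ranges over all similarity-invariant points p : Wₙ → ℝⁿ. -/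
/-!
Values of invariant points are fixed by the symmetries of `K` by the very definition of invariance.
Conversely, let `x` be fixed by all symmetries of `K`; an invariant point `p` with `p K = x` has to
be constructed.

The tool is the Chebyshev centre of a nonempty compact set (the centre of its smallest enclosing
ball). It commutes with similarities (`center_radius_map`), and by the parallelogram law it is
unique and depends continuously on the set in the Hausdorff metric (`radius_sq_add_le`,
`continuous_center`). Together with the circumradius it normalizes every body to centre `0` and
circumradius `1`, which reduces similarities to the compact group `O(n)` (`similarity_data`).

Let `K₀` be the normalized body and `x₀` the normalized point. Since the stabilizer of `K₀` in
`O(n)` fixes `x₀`, the map `u K₀ ↦ u x₀` is well defined and continuous on the compact orbit of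
`K₀`, and Tietze's theorem extends it to a continuous `F` on all nonempty compact sets
(`exists_extension_orbit`). To make `F` equivariant, `F S` is replaced by the Chebyshev centre of
the compact set `{u⁻¹ F(u S) : u ∈ O(n)}`, which depends continuously and equivariantly on `S` and
reduces to `{x₀}` at `K₀` (`exists_equivariant`). Undoing the normalization gives `p`.
-/

open Set TopologicalSpace

noncomputable section

/-- A similarity transformation of `ℝⁿ`: `x ↦ c • U x + v` with `c > 0`,
`U` an orthogonal linear transformation, and `v ∈ ℝⁿ`. -/
def IsSimilarity {n : ℕ} (A : Euc n → Euc n) : Prop :=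
  ∃ (c : ℝ) (U : Euc n ≃ₗᵢ[ℝ] Euc n) (v : Euc n), 0 < c ∧ ∀ x, A x = c • U x + v

/-! ### The Chebyshev centre of a compact set -/

/-- The radius of the smallest closed ball about `y` containing `S`. It is encoded as the
Hausdorff distance from `{y}` to `S`, so continuity in both variables comes for free. -/
def radAt {n : ℕ} (S : NonemptyCompacts (Euc n)) (y : Euc n) : ℝ :=
  dist ({y} : NonemptyCompacts (Euc n)) S

lemma radAt_nonneg {n : ℕ} (S : NonemptyCompacts (Euc n)) (y : Euc n) : 0 ≤ radAt S y :=
  dist_nonneg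

lemma radAt_le_iff {n : ℕ} (S : NonemptyCompacts (Euc n)) (y : Euc n) (a : ℝ) :
    radAt S y ≤ a ↔ ∀ z ∈ S, dist y z ≤ a := by
  constructor
  · intro h z hz
    refine le_of_forall_gt fun b hb => ?_
    have hb' : Metric.hausdorffDist (({y} : NonemptyCompacts (Euc n)) : Set (Euc n)) S < b :=
      lt_of_le_of_lt h hb
    obtain ⟨w, hw, hd⟩ := Metric.exists_dist_lt_of_hausdorffDist_lt' (y := z) hz hb'
      (Metric.hausdorffEDist_ne_top_of_nonempty_of_bounded (NonemptyCompacts.nonempty _)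
        S.nonempty (NonemptyCompacts.isCompact _).isBounded S.isCompact.isBounded)
    have : w = y := by simpa using hw
    exact this ▸ hd
  · intro h
    obtain ⟨z₀, hz₀⟩ := S.nonempty
    refine Metric.hausdorffDist_le_of_mem_dist (dist_nonneg.trans (h z₀ hz₀)) ?_ ?_
    · intro x hx
      have hx : x = y := by simpa using hx
      exact ⟨z₀, hz₀, hx ▸ h z₀ hz₀⟩
    · intro z hz
      exact ⟨y, by simp, dist_comm y z ▸ h z hz⟩

lemma dist_le_radAt {n : ℕ} {S : NonemptyCompacts (Euc n)} (y : Euc n) {z : Euc n}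
    (hz : z ∈ S) : dist y z ≤ radAt S y :=
  (radAt_le_iff S y _).1 le_rfl z hz

lemma continuous_radAt {n : ℕ} :
    Continuous fun q : NonemptyCompacts (Euc n) × Euc n => radAt q.1 q.2 :=
  (NonemptyCompacts.continuous_singleton.comp continuous_snd).dist continuous_fst

lemma radAt_le_add_dist {n : ℕ} (S T : NonemptyCompacts (Euc n)) (y : Euc n) :
    radAt S y ≤ radAt T y + dist S T := by
  rw [dist_comm S T]
  exact dist_triangle _ _ _

lemma exists_center {n : ℕ} (S : NonemptyCompacts (Euc n)) :
    ∃ c, ∀ y, radAt S c ≤ radAt S y := by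
  have hc : Continuous (radAt S) := continuous_radAt.comp (Continuous.prodMk_right S)
  obtain ⟨z, hz⟩ := S.nonempty
  refine hc.exists_forall_le ?_
  exact Filter.tendsto_atTop_mono (fun y => dist_le_radAt y hz)
    (tendsto_dist_right_cocompact_atTop z)

/-- The Chebyshev centre of `S`: the centre of the smallest closed ball containing `S`. -/
def chebCenter {n : ℕ} (S : NonemptyCompacts (Euc n)) : Euc n := (exists_center S).choose

/-- The circumradius of `S`: the radius of the smallest closed ball containing `S`. -/
def radius {n : ℕ} (S : NonemptyCompacts (Euc n)) : ℝ := radAt S (chebCenter S)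

lemma radius_le {n : ℕ} (S : NonemptyCompacts (Euc n)) (y : Euc n) : radius S ≤ radAt S y :=
  (exists_center S).choose_spec y

lemma radius_nonneg {n : ℕ} (S : NonemptyCompacts (Euc n)) : 0 ≤ radius S := radAt_nonneg _ _

/-- Quantitative uniqueness of the Chebyshev centre, obtained by applying the parallelogram law to
the midpoint of `y` and the centre. -/
lemma radius_sq_add_le {n : ℕ} (S : NonemptyCompacts (Euc n)) (y : Euc n) :
    radius S ^ 2 + dist y (chebCenter S) ^ 2 / 2 ≤ radAt S y ^ 2 := by
  set c := chebCenter S with hc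
  set b := Real.sqrt ((radius S ^ 2 + radAt S y ^ 2) / 2 - dist y c ^ 2 / 4) with hb
  have key : ∀ z ∈ S, dist (midpoint ℝ y c) z ^ 2 ≤
      (radius S ^ 2 + radAt S y ^ 2) / 2 - dist y c ^ 2 / 4 := by
    intro z hz
    have h1 : dist y z ^ 2 ≤ radAt S y ^ 2 := by
      gcongr; exact dist_le_radAt y hz
    have h2 : dist c z ^ 2 ≤ radius S ^ 2 := by
      gcongr; exact dist_le_radAt c hz
    have h3 := parallelogram_law_with_norm ℝ (y - z) (c - z)
    have h4 : (y - z) + (c - z) = (2 : ℝ) • (midpoint ℝ y c - z) := by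
      rw [midpoint_eq_smul_add, smul_sub, smul_smul]
      norm_num
      rw [two_smul]; abel
    rw [h4, norm_smul, show y - z - (c - z) = y - c by abel, ← dist_eq_norm, ← dist_eq_norm,
      ← dist_eq_norm, ← dist_eq_norm] at h3
    norm_num at h3
    nlinarith
  have h : radAt S (midpoint ℝ y c) ≤ b :=
    (radAt_le_iff _ _ _).2 fun z hz => Real.le_sqrt_of_sq_le (key z hz)
  obtain ⟨z₀, hz₀⟩ := S.nonempty
  have hb2 : b ^ 2 = (radius S ^ 2 + radAt S y ^ 2) / 2 - dist y c ^ 2 / 4 :=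
    Real.sq_sqrt ((sq_nonneg _).trans (key z₀ hz₀))
  have h5 : radius S ^ 2 ≤ b ^ 2 := by
    have := radius_nonneg S
    gcongr
    exact (radius_le S _).trans h
  linarith

lemma eq_center {n : ℕ} (S : NonemptyCompacts (Euc n)) (x : Euc n)
    (h : ∀ y, radAt S x ≤ radAt S y) : x = chebCenter S := by
  have h1 : radAt S x = radius S := le_antisymm (h _) (radius_le S x)
  have h2 := radius_sq_add_le S x
  rw [h1] at h2
  have h3 : dist x (chebCenter S) ^ 2 = 0 := le_antisymm (by linarith) (sq_nonneg _)
  exact dist_eq_zero.1 (pow_eq_zero_iff (two_ne_zero) |>.1 h3)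

lemma dist_center_sq_le {n : ℕ} (S T : NonemptyCompacts (Euc n)) :
    dist (chebCenter T) (chebCenter S) ^ 2 ≤ 8 * dist T S * (radius S + dist T S) := by
  have h1 : radAt S (chebCenter T) ≤ radius S + 2 * dist T S := by
    have a := radAt_le_add_dist S T (chebCenter T)
    have b := radius_le T (chebCenter S)
    have c := radAt_le_add_dist T S (chebCenter S)
    have d : dist S T = dist T S := dist_comm _ _
    simp only [radius] at *
    linarith
  have h2 := radius_sq_add_le S (chebCenter T)
  have h3 : radAt S (chebCenter T) ^ 2 ≤ (radius S + 2 * dist T S) ^ 2 := by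
    have := radAt_nonneg S (chebCenter T)
    gcongr
  nlinarith

lemma continuous_center {n : ℕ} :
    Continuous (chebCenter : NonemptyCompacts (Euc n) → Euc n) := by
  refine continuous_iff_continuousAt.2 fun S => ?_
  rw [ContinuousAt, tendsto_iff_dist_tendsto_zero]
  have hlim : Filter.Tendsto
      (fun T : NonemptyCompacts (Euc n) => Real.sqrt (8 * dist T S * (radius S + dist T S)))
      (nhds S) (nhds 0) := by
    have : Continuous
        (fun T : NonemptyCompacts (Euc n) =>
          Real.sqrt (8 * dist T S * (radius S + dist T S))) := by
      fun_prop
    simpa using this.tendsto S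
  exact squeeze_zero (fun _ => dist_nonneg)
    (fun T => Real.le_sqrt_of_sq_le (dist_center_sq_le S T)) hlim

lemma continuous_radius {n : ℕ} :
    Continuous (radius : NonemptyCompacts (Euc n) → ℝ) :=
  continuous_radAt.comp (continuous_id.prodMk continuous_center)

lemma center_singleton {n : ℕ} (x : Euc n) :
    chebCenter ({x} : NonemptyCompacts (Euc n)) = x :=
  (eq_center _ x fun y => by simp [radAt]).symm

/-- A set of circumradius zero lies in a single point, so it has empty interior once `n ≥ 1`. -/
lemma radius_pos {n : ℕ} (hn : 1 ≤ n) (S : NonemptyCompacts (Euc n))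
    (hS : (interior (S : Set (Euc n))).Nonempty) : 0 < radius S := by
  refine lt_of_le_of_ne (radius_nonneg S) fun h0 => ?_
  have : NeZero n := ⟨by omega⟩
  have hsub : (S : Set (Euc n)) ⊆ {chebCenter S} := fun z hz => by
    have h := dist_le_radAt (chebCenter S) (show z ∈ S from hz)
    rw [show radAt S (chebCenter S) = 0 from h0.symm] at h
    exact (dist_le_zero.1 h).symm
  have h := interior_mono hsub
  rw [interior_singleton] at h
  exact hS.ne_empty (Set.subset_empty_iff.1 h)

/-- The Chebyshev centre and circumradius are covariant under every map that scales all distances by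
a constant factor. -/
lemma center_radius_map {n : ℕ} (S : NonemptyCompacts (Euc n)) (A : Euc n → Euc n)
    (hA : Continuous A) (hsurj : Function.Surjective A) (k : ℝ) (hk : 0 < k)
    (hd : ∀ x y, dist (A x) (A y) = k * dist x y) :
    chebCenter (S.map A hA) = A (chebCenter S) ∧ radius (S.map A hA) = k * radius S := by
  have key : ∀ y, radAt (S.map A hA) (A y) = k * radAt S y := by
    have h1 : ∀ y a, radAt (S.map A hA) (A y) ≤ a ↔ k * radAt S y ≤ a := by
      intro y a
      rw [radAt_le_iff, mul_comm, ← le_div_iff₀ hk, radAt_le_iff]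
      constructor
      · intro h z hz
        have := h (A z) (by
          rw [← SetLike.mem_coe, NonemptyCompacts.coe_map]; exact ⟨z, hz, rfl⟩)
        rw [hd] at this
        rwa [le_div_iff₀ hk, mul_comm]
      · intro h w hw
        rw [← SetLike.mem_coe, NonemptyCompacts.coe_map] at hw
        obtain ⟨z, hz, rfl⟩ := hw
        rw [hd, mul_comm, ← le_div_iff₀ hk]
        exact h z hz
    intro y
    exact le_antisymm ((h1 y _).2 le_rfl) ((h1 y _).1 le_rfl)
  have hc : A (chebCenter S) = chebCenter (S.map A hA) := by
    refine eq_center _ _ fun w => ?_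
    obtain ⟨y, rfl⟩ := hsurj w
    rw [key, key]
    exact mul_le_mul_of_nonneg_left (radius_le S y) hk.le
  exact ⟨hc.symm, by rw [radius, ← hc, key, radius]⟩

/-! ### The orthogonal group -/

/-- The orthogonal group of `ℝⁿ`, as the unitary elements of the algebra of continuous linear
operators. -/
abbrev Orth (n : ℕ) := unitary (Euc n →L[ℝ] Euc n)

lemma continuous_inv_orth {n : ℕ} : Continuous fun u : Orth n => u⁻¹ :=
  continuous_induced_rng.2
    (ContinuousLinearMap.adjoint.continuous.comp continuous_subtype_val)

instance instCompactSpaceOrth (n : ℕ) : CompactSpace (Orth n) := by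
  have : ProperSpace (Euc n →L[ℝ] Euc n) := FiniteDimensional.proper ℝ _
  refine (isCompact_iff_compactSpace
    (s := ((unitary (Euc n →L[ℝ] Euc n) : Submonoid _) : Set (Euc n →L[ℝ] Euc n)))).1 ?_
  have : ContinuousStar (Euc n →L[ℝ] Euc n) := ⟨ContinuousLinearMap.adjoint.continuous⟩
  refine Metric.isCompact_of_isClosed_isBounded isClosed_unitary ?_
  refine (Metric.isBounded_closedBall (x := (0 : Euc n →L[ℝ] Euc n)) (r := 1)).subset ?_
  intro u hu
  rw [mem_closedBall_zero_iff]
  exact ContinuousLinearMap.opNorm_le_bound _ zero_le_one fun x => by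
    rw [one_mul, Unitary.norm_map ⟨u, hu⟩ x]

/-- The action of an orthogonal operator on points. -/
def act {n : ℕ} (u : Orth n) (x : Euc n) : Euc n := (u : Euc n →L[ℝ] Euc n) x

lemma act_mul {n : ℕ} (u v : Orth n) (x : Euc n) : act (u * v) x = act u (act v x) := rfl

lemma act_one {n : ℕ} (x : Euc n) : act (1 : Orth n) x = x := rfl

lemma act_inv_act {n : ℕ} (u : Orth n) (x : Euc n) : act u⁻¹ (act u x) = x := by
  rw [← act_mul, inv_mul_cancel, act_one]

lemma act_act_inv {n : ℕ} (u : Orth n) (x : Euc n) : act u (act u⁻¹ x) = x := by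
  rw [← act_mul, mul_inv_cancel, act_one]

lemma act_sub {n : ℕ} (u : Orth n) (x y : Euc n) : act u (x - y) = act u x - act u y :=
  map_sub _ _ _

lemma act_smul {n : ℕ} (u : Orth n) (k : ℝ) (x : Euc n) : act u (k • x) = k • act u x :=
  map_smul _ _ _

lemma dist_act {n : ℕ} (u : Orth n) (x y : Euc n) : dist (act u x) (act u y) = dist x y := by
  rw [dist_eq_norm, ← act_sub, dist_eq_norm]
  exact Unitary.norm_map u _

lemma continuous_act {n : ℕ} : Continuous fun q : Orth n × Euc n => act q.1 q.2 :=
  (continuous_subtype_val.comp continuous_fst).clm_apply continuous_snd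

lemma continuous_act_right {n : ℕ} (u : Orth n) : Continuous (act u) :=
  (u : Euc n →L[ℝ] Euc n).continuous

/-- The action of an orthogonal operator on compact sets. -/
def actSet {n : ℕ} (u : Orth n) (S : NonemptyCompacts (Euc n)) : NonemptyCompacts (Euc n) :=
  S.map (act u) (continuous_act_right u)

lemma coe_actSet {n : ℕ} (u : Orth n) (S : NonemptyCompacts (Euc n)) :
    (actSet u S : Set (Euc n)) = act u '' S := rfl

lemma actSet_mul {n : ℕ} (u v : Orth n) (S : NonemptyCompacts (Euc n)) :
    actSet (u * v) S = actSet u (actSet v S) := by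
  apply SetLike.coe_injective
  rw [coe_actSet, coe_actSet, coe_actSet, Set.image_image]
  rfl

lemma actSet_one {n : ℕ} (S : NonemptyCompacts (Euc n)) : actSet 1 S = S := by
  apply SetLike.coe_injective
  exact (Set.image_congr fun x _ => act_one x).trans (Set.image_id' _)

lemma continuous_actSet {n : ℕ} :
    Continuous fun q : Orth n × NonemptyCompacts (Euc n) => actSet q.1 q.2 := by
  have hg : Continuous (Function.uncurry
      fun (q : Orth n × NonemptyCompacts (Euc n)) (x : Euc n) => act q.1 x) :=
    continuous_act.comp ((continuous_fst.comp continuous_fst).prodMk continuous_snd)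
  exact continuous_snd.nonemptyCompacts_map' hg

/-! ### Equivariant extension from an orbit -/

/-- Tietze extension of the map `u K₀ ↦ u x₀` from the compact orbit of `K₀`. -/
lemma exists_extension_orbit {n : ℕ} (K₀ : NonemptyCompacts (Euc n)) (x₀ : Euc n)
    (hfix : ∀ u : Orth n, actSet u K₀ = K₀ → act u x₀ = x₀) :
    ∃ F : NonemptyCompacts (Euc n) → Euc n, Continuous F ∧
      ∀ u : Orth n, F (actSet u K₀) = act u x₀ := by
  let o : Orth n → NonemptyCompacts (Euc n) := fun u => actSet u K₀
  have ho : Continuous o := continuous_actSet.comp (Continuous.prodMk_left K₀)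
  have hfac : ∀ u v : Orth n, o u = o v → act u x₀ = act v x₀ := by
    intro u v h
    have h1 : actSet (v⁻¹ * u) K₀ = K₀ := by
      rw [actSet_mul, show actSet u K₀ = actSet v K₀ from h, ← actSet_mul, inv_mul_cancel,
        actSet_one]
    rw [← act_act_inv v (act u x₀), ← act_mul v⁻¹ u, hfix _ h1]
  let s : Set (NonemptyCompacts (Euc n)) := Set.range o
  have hs : IsClosed s := (isCompact_range ho).isClosed
  let o' : Orth n → s := fun u => ⟨o u, u, rfl⟩
  have ho' : Continuous o' := ho.subtype_mk _
  have hsurj : Function.Surjective o' := by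
    rintro ⟨_, u, rfl⟩
    exact ⟨u, rfl⟩
  -- A continuous surjection from a compact space to a Hausdorff space is a quotient map.
  have hq : Topology.IsQuotientMap o' := ho'.isClosedMap.isQuotientMap ho' hsurj
  let f : s → Euc n := fun t => act (Function.surjInv hsurj t) x₀
  have hf : ∀ u, f (o' u) = act u x₀ := fun u =>
    hfac _ _ (congrArg Subtype.val (Function.surjInv_eq hsurj (o' u)))
  have hfc : Continuous f := by
    rw [hq.continuous_iff]
    have : f ∘ o' = fun u => act u x₀ := funext hf
    rw [this]
    exact continuous_act.comp (Continuous.prodMk_left x₀)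
  obtain ⟨g, hg⟩ := ContinuousMap.exists_restrict_eq hs ⟨f, hfc⟩
  refine ⟨g, g.continuous, fun u => ?_⟩
  have h : g (o u) = f (o' u) := DFunLike.congr_fun hg (o' u)
  exact h.trans (hf u)

/-- The set `{u⁻¹ F(u S) : u orthogonal}` of values at `S` of all conjugates of `F`. -/
def conjSet {n : ℕ} (F : NonemptyCompacts (Euc n) → Euc n) (hF : Continuous F)
    (S : NonemptyCompacts (Euc n)) : NonemptyCompacts (Euc n) :=
  (⊤ : NonemptyCompacts (Orth n)).map (fun u => act u⁻¹ (F (actSet u S)))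
    (continuous_act.comp (continuous_inv_orth.prodMk
      (hF.comp (continuous_actSet.comp (Continuous.prodMk_left S)))))

lemma coe_conjSet {n : ℕ} (F : NonemptyCompacts (Euc n) → Euc n) (hF : Continuous F)
    (S : NonemptyCompacts (Euc n)) :
    (conjSet F hF S : Set (Euc n)) = Set.range fun u => act u⁻¹ (F (actSet u S)) := by
  rw [conjSet, NonemptyCompacts.coe_map, NonemptyCompacts.coe_top, Set.image_univ]

lemma continuous_conjSet {n : ℕ} (F : NonemptyCompacts (Euc n) → Euc n) (hF : Continuous F) :
    Continuous (conjSet F hF) := by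
  have hg : Continuous (Function.uncurry
      fun (S : NonemptyCompacts (Euc n)) (u : Orth n) => act u⁻¹ (F (actSet u S))) :=
    continuous_act.comp ((continuous_inv_orth.comp continuous_snd).prodMk
      (hF.comp (continuous_actSet.comp (continuous_snd.prodMk continuous_fst))))
  exact (continuous_const (y := (⊤ : NonemptyCompacts (Orth n)))).nonemptyCompacts_map' hg

lemma conjSet_actSet {n : ℕ} (F : NonemptyCompacts (Euc n) → Euc n) (hF : Continuous F)
    (w : Orth n) (S : NonemptyCompacts (Euc n)) :
    conjSet F hF (actSet w S) = actSet w (conjSet F hF S) := by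
  apply SetLike.coe_injective
  rw [coe_actSet, coe_conjSet, coe_conjSet]
  have h : ∀ u : Orth n, act u⁻¹ (F (actSet u (actSet w S))) =
      act w (act (u * w)⁻¹ (F (actSet (u * w) S))) := fun u => by
    rw [mul_inv_rev, act_mul w⁻¹, act_act_inv, actSet_mul]
  ext y
  constructor
  · rintro ⟨u, rfl⟩
    exact ⟨_, ⟨u * w, rfl⟩, (h u).symm⟩
  · rintro ⟨_, ⟨u, rfl⟩, rfl⟩
    refine ⟨u * w⁻¹, ?_⟩
    have := h (u * w⁻¹)
    rwa [inv_mul_cancel_right] at this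

/-- An orthogonally equivariant continuous map taking a prescribed value `x₀` at `K₀`; the
Chebyshev centre of the set of conjugates plays the part of averaging over Haar measure. -/
lemma exists_equivariant {n : ℕ} (K₀ : NonemptyCompacts (Euc n)) (x₀ : Euc n)
    (hfix : ∀ u : Orth n, actSet u K₀ = K₀ → act u x₀ = x₀) :
    ∃ q : NonemptyCompacts (Euc n) → Euc n, Continuous q ∧
      (∀ (u : Orth n) S, q (actSet u S) = act u (q S)) ∧ q K₀ = x₀ := by
  obtain ⟨F, hF, hFo⟩ := exists_extension_orbit K₀ x₀ hfix
  refine ⟨fun S => chebCenter (conjSet F hF S), continuous_center.comp (continuous_conjSet F hF),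
    fun u S => ?_, ?_⟩
  · simp only [conjSet_actSet]
    exact (center_radius_map _ (act u) (continuous_act_right u)
      (fun y => ⟨act u⁻¹ y, act_act_inv u y⟩) 1 one_pos fun x y => by
        rw [dist_act, one_mul]).1
  · have h : conjSet F hF K₀ = {x₀} := by
      apply SetLike.coe_injective
      rw [coe_conjSet]
      simp [hFo, act_inv_act]
    simp only [h, center_singleton]

/-! ### Normalization of convex bodies -/

/-- The translate and dilate of `S` with Chebyshev centre `0` and circumradius `1` (the
singleton `{0}` when the circumradius vanishes). -/
def normalBody {n : ℕ} (S : NonemptyCompacts (Euc n)) : NonemptyCompacts (Euc n) :=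
  S.map (fun x => (radius S)⁻¹ • (x - chebCenter S)) (by fun_prop)

lemma coe_normalBody {n : ℕ} (S : NonemptyCompacts (Euc n)) :
    (normalBody S : Set (Euc n)) = (fun x => (radius S)⁻¹ • (x - chebCenter S)) '' S := rfl

lemma continuous_normalBody {n : ℕ} (hn : 1 ≤ n) :
    Continuous fun L : ConvBody n => normalBody L.1 := by
  have hg : Continuous (Function.uncurry
      fun (L : ConvBody n) (x : Euc n) => (radius L.1)⁻¹ • (x - chebCenter L.1)) := by
    have h1 : Continuous fun p : ConvBody n × Euc n => radius p.1.1 :=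
      continuous_radius.comp (continuous_subtype_val.comp continuous_fst)
    have h2 : Continuous fun p : ConvBody n × Euc n => chebCenter p.1.1 :=
      continuous_center.comp (continuous_subtype_val.comp continuous_fst)
    exact (h1.inv₀ fun p => (radius_pos hn p.1.1 p.1.2.2).ne').smul (continuous_snd.sub h2)
  exact continuous_subtype_val.nonemptyCompacts_map' hg

/-- How the centre, the circumradius and the normalization transform under a similarity. -/
lemma similarity_data {n : ℕ} (S T : NonemptyCompacts (Euc n)) (k : ℝ) (hk : 0 < k)
    (u : Orth n) (v : Euc n) (hT : (T : Set (Euc n)) = (fun x => k • act u x + v) '' S) :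
    chebCenter T = k • act u (chebCenter S) + v ∧ radius T = k * radius S ∧
      normalBody T = actSet u (normalBody S) := by
  have hcont : Continuous fun x => k • act u x + v :=
    ((continuous_act_right u).const_smul k).add_const v
  have hTS : T = S.map _ hcont := SetLike.coe_injective hT
  obtain ⟨h1, h2⟩ := center_radius_map S _ hcont
    (fun y => ⟨act u⁻¹ (k⁻¹ • (y - v)), by
      simp only [act_act_inv]; rw [smul_inv_smul₀ hk.ne']; abel⟩) k hk
    (fun x y => by
      rw [dist_add_right, dist_smul₀, dist_act, Real.norm_of_nonneg hk.le])
  rw [← hTS] at h1 h2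
  refine ⟨h1, h2, ?_⟩
  apply SetLike.coe_injective
  rw [coe_normalBody, coe_actSet, coe_normalBody, hT, h1, h2, Set.image_image, Set.image_image]
  congr 1
  funext x
  rw [act_smul, act_sub, add_sub_add_right_eq_sub, ← smul_sub, smul_smul, mul_inv_rev,
    inv_mul_cancel_right₀ hk.ne']

theorem stmt5 (n : ℕ) (hn : 1 ≤ n) (K : ConvBody n) :
    -- the set of points fixed by every similarity `A` with `A(K) = K` ...
    {x : Euc n | ∀ A : Euc n → Euc n, IsSimilarity A →
        A '' (K.1 : Set (Euc n)) = (K.1 : Set (Euc n)) → A x = x} =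
    -- ... equals the set of values `p(K)` over all similarity-invariant points `p`
    {x : Euc n | ∃ p : ConvBody n → Euc n,
        Continuous p ∧
        (∀ K' L : ConvBody n, ∀ A : Euc n → Euc n, IsSimilarity A →
          (L.1 : Set (Euc n)) = A '' (K'.1 : Set (Euc n)) → p L = A (p K')) ∧
        p K = x} := by
  apply Set.Subset.antisymm
  · intro x hx
    have hx : ∀ A : Euc n → Euc n, IsSimilarity A →
      A '' (K.1 : Set (Euc n)) = (K.1 : Set (Euc n)) → A x = x := hx
    set c := chebCenter K.1 with hc
    set r := radius K.1 with hr
    have hr0 : r ≠ 0 := (radius_pos hn K.1 K.2.2).ne'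
    -- A rotation `u` fixing the normalized body yields the symmetry `y ↦ c + u (y - c)` of `K`.
    have hfix : ∀ u : Orth n, actSet u (normalBody K.1) = normalBody K.1 →
        act u (r⁻¹ • (x - c)) = r⁻¹ • (x - c) := by
      intro u hu
      have hA : ∀ y : Euc n, (1 : ℝ) • act u y + (c - act u c) = c + act u (y - c) := by
        intro y; rw [act_sub, one_smul]; abel
      have hsim : IsSimilarity fun y => c + act u (y - c) :=
        ⟨1, Unitary.linearIsometryEquiv u, c - act u c, one_pos, fun y => (hA y).symm⟩
      have hK : (fun z : Euc n => r • z + c) '' (normalBody K.1 : Set (Euc n)) = K.1 := by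
        rw [coe_normalBody, Set.image_image]
        simp only [← hr, ← hc, smul_inv_smul₀ hr0, sub_add_cancel, Set.image_id']
      have himg : (fun y => c + act u (y - c)) '' (K.1 : Set (Euc n)) = K.1 := by
        conv_rhs => rw [← hK, ← hu, coe_actSet, Set.image_image]
        conv_lhs => rw [← hK, Set.image_image]
        congr 1
        funext z
        rw [add_sub_cancel_right, act_smul, add_comm]
      have h := hx _ hsim himg
      have h' : act u (x - c) = x - c := eq_sub_of_add_eq' h
      rw [act_smul, h']
    obtain ⟨q, hqc, hqe, hq0⟩ := exists_equivariant (normalBody K.1) (r⁻¹ • (x - c)) hfix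
    refine ⟨fun L => chebCenter L.1 + radius L.1 • q (normalBody L.1), ?_, ?_, ?_⟩
    · exact (continuous_center.comp continuous_subtype_val).add
        ((continuous_radius.comp continuous_subtype_val).smul
          (hqc.comp (continuous_normalBody hn)))
    · rintro K' L A ⟨k, U, v, hk, hA⟩ hL
      set u : Orth n := Unitary.linearIsometryEquiv.symm U with hu
      have hA' : A = fun y => k • act u y + v := funext hA
      rw [hA'] at hL ⊢
      obtain ⟨h1, h2, h3⟩ := similarity_data K'.1 L.1 k hk u v hL
      change chebCenter L.1 + radius L.1 • q (normalBody L.1) = _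
      rw [h1, h2, h3, hqe]
      have hadd : ∀ a b : Euc n, act u (a + b) = act u a + act u b := fun a b => map_add _ _ _
      change _ = k • act u (chebCenter K'.1 + radius K'.1 • q (normalBody K'.1)) + v
      rw [hadd, act_smul, smul_add, smul_smul]
      abel
    · simp only [hq0, ← hr, ← hc]
      rw [smul_inv_smul₀ hr0]; abel
  · rintro x ⟨p, -, hp, rfl⟩ A hA hAK
    exact (hp K K A hA hAK.symm).symm
end
end
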